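/- Let U be a jet and 𝐅 = (F_a)_{a≤0} an extended non-linearity. Then U satisfies the algebraic fixed point equation U = U^P + 𝓘_0[𝐅(U)] if and only if U is coherent with 𝐅, i.e. U is of the planted form U = U^P + Σ_{τ∈𝔗^ex} u_{𝓘[τ]} 𝓘_0[τ]/τ! and u_{𝓘[τ]} = Υ^𝐅[τ](U^P, 0) for every τ ∈ 𝔗^ex. -/

import Mathlib

open MeasureTheory
open scoped Classical

noncomputable section

namespace RS

inductive Typ : Type
  | Xi : Typ
  | In : Typ
deriving DecidableEq

/-- multi-indices `ℕ^d` -/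
abbrev Nd (d : ℕ) := Fin d → ℕ

/-- edge types `ℰ = 𝔏 × ℕ^d` -/
abbrev ET (d : ℕ) := Typ × Nd d

/-- Decorated rooted trees (with an extended decoration `a : ℝ` at each node),
in the symbolic representation `𝟏^a X^k Ξ_L ∏_{(m,τ) ∈ B} 𝓘_m[τ]`.
Trees of the reduced structure are those with all extended decorations zero. -/
inductive Tr (d : ℕ) : Type
  | node (a : ℝ) (k : Nd d) (L : List (Nd d)) (B : List (Nd d × Tr d)) : Tr d

namespace Tr

instance {d} : DecidableEq (Tr d) := Classical.decEq _

variable {d : ℕ}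

/-- the tree product: join roots, add root decorations -/
def mul : Tr d → Tr d → Tr d
  | node a k L B, node a' k' L' B' => node (a + a') (k + k') (L ++ L') (B ++ B')

/-- the unit tree `𝟏` -/
def one (d : ℕ) : Tr d := node 0 0 [] []

/-- `X^k` -/
def Xpow (k : Nd d) : Tr d := node 0 k [] []

/-- `Ξ_l` -/
def Xi (l : Nd d) : Tr d := node 0 0 [l] []

/-- `𝓘_m[τ]` -/
def plant (m : Nd d) (τ : Tr d) : Tr d := node 0 0 [] [(m, τ)]

/-- `𝟏^a` -/
def oneA {d : ℕ} (a : ℝ) : Tr d := node a 0 [] []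

/-- the `𝔰`-degree of a multi-index -/
def degN (s : Fin d → ℝ) (k : Nd d) : ℝ := ∑ i, (k i : ℝ) * s i

mutual
  /-- the degree `|τ|_𝔰` (ignoring extended decorations) -/
  def deg (s : Fin d → ℝ) (cXi cI : ℝ) : Tr d → ℝ
    | node _ k L B => degN s k + (L.map fun l => cXi - degN s l).sum + degB s cXi cI B
  def degB (s : Fin d → ℝ) (cXi cI : ℝ) : List (Nd d × Tr d) → ℝ
    | [] => 0
    | y :: ys => (deg s cXi cI y.2 + cI - degN s y.1) + degB s cXi cI ys
end

mutual
  /-- sum of all extended decorations of a tree -/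
  def oSum : Tr d → ℝ
    | node a _ _ B => a + oSumB B
  def oSumB : List (Nd d × Tr d) → ℝ
    | [] => 0
    | y :: ys => oSum y.2 + oSumB ys
end

/-- the degree `|τ|₊ = |τ|_𝔰 + Σ_x 𝔬(x)` -/
def degp (s : Fin d → ℝ) (cXi cI : ℝ) (τ : Tr d) : ℝ := deg s cXi cI τ + oSum τ

/-- trees all of whose extended decorations vanish (i.e. trees of the reduced structure) -/
inductive ZeroO : Tr d → Prop
  | node {k : Nd d} {L : List (Nd d)} {B : List (Nd d × Tr d)} :
      (∀ y ∈ B, ZeroO y.2) → ZeroO (node 0 k L B)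

/-- the multiset `𝒩(τ)` of edge decorations at the root -/
def rootN : Tr d → Multiset (ET d)
  | node _ _ L B =>
      (↑(L.map fun l => ((Typ.Xi, l) : ET d)) : Multiset (ET d)) +
      (↑(B.map fun y => ((Typ.In, y.1) : ET d)) : Multiset (ET d))

/-- the polynomial decoration at the root -/
def rootK : Tr d → Nd d
  | node _ k _ _ => k

/-- the extended decoration at the root -/
def rootO : Tr d → ℝ
  | node a _ _ _ => a

/-- planted trees: `𝟏^a Ξ_l` or `𝟏^a 𝓘_m[σ]` -/
def Planted : Tr d → Prop
  | node _ k L B => k = 0 ∧ L.length + B.length = 1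

/-- a tree strongly conforms to a rule `R` if the multiset of outgoing edge
decorations at every node belongs to `R` -/
inductive Conforms (R : Set (Multiset (ET d))) : Tr d → Prop
  | node {a : ℝ} {k : Nd d} {L : List (Nd d)} {B : List (Nd d × Tr d)} :
      rootN (node a k L B) ∈ R → (∀ y ∈ B, Conforms R y.2) →
      Conforms R (node a k L B)

end Tr

/-- a rule is normal if it is closed under sub-multisets -/
def Normal {d : ℕ} (R : Set (Multiset (ET d))) : Prop :=
  ∀ A B : Multiset (ET d), A ≤ B → B ∈ R → A ∈ R

/-- `reg(N) = Σ_{(𝔱,k) ∈ N} (reg(𝔱) - |k|_𝔰)` -/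
def regMS {d : ℕ} (s : Fin d → ℝ) (reg : Typ → ℝ) (N : Multiset (ET d)) : ℝ :=
  (N.map fun o => reg o.1 - Tr.degN s o.2).sum

/-- subcriticality of a rule: there is `reg : 𝔏 → ℝ` with `reg(Ξ) < |Ξ|_𝔰` and
`reg(𝓘) < |𝓘|_𝔰 + inf_{N ∈ R} reg(N)` -/
def Subcritical {d : ℕ} (s : Fin d → ℝ) (cXi cI : ℝ) (R : Set (Multiset (ET d))) : Prop :=
  ∃ reg : Typ → ℝ, reg Typ.Xi < cXi ∧
    ∃ c : ℝ, (∀ N ∈ R, c ≤ regMS s reg N) ∧ reg Typ.In < cI + c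

/-- the set of strongly conforming trees of the reduced structure, `𝔗∘` -/
def Tcirc {d : ℕ} (R : Set (Multiset (ET d))) : Set (Tr d) :=
  {τ | Tr.ZeroO τ ∧ Tr.Conforms R τ}


/-- the factorial `k! = ∏ (k i)!` of a multi-index -/
def ndFact {d : ℕ} (k : Nd d) : ℕ := ∏ i, (k i).factorial

/-- the (finite, when `s i ≥ 1`) set `{k ∈ ℕ^d : |k|_𝔰 < c}` -/
def lowIdx {d : ℕ} (s : Fin d → ℝ) (c : ℝ) : Finset (Nd d) :=
  (Fintype.piFinset fun _ : Fin d => Finset.range (Nat.ceil (max c 0) + 1)).filter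
    fun k => Tr.degN s k < c


/-- non-linearities: functions `ℝ^ℰ → ℝ` -/
abbrev NLf (d : ℕ) := (ET d → ℝ) → ℝ

/-- a genuine non-linearity: smooth and depending on finitely many coordinates -/
def IsNonlin (F : NLf d) : Prop :=
  ∃ (S : Finset (ET d)) (f : ({o : ET d // o ∈ S} → ℝ) → ℝ), ContDiff ℝ (⊤ : ℕ∞) f ∧
    ∀ x : ET d → ℝ, F x = f fun o => x o.1

/-- the partial derivative `D_o` in the coordinate `o ∈ ℰ` -/
def Dedge (o : ET d) (F : NLf d) : NLf d :=
  fun x => deriv (fun t : ℝ => F (Function.update x o (x o + t))) 0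

/-- iterated partial derivatives `D_{o_1} ⋯ D_{o_n}` -/
def DList (os : List (ET d)) (F : NLf d) : NLf d := os.foldr Dedge F

/-- the `i`-th coordinate multi-index `e_i` -/
def eI (i : Fin d) : Nd d := Pi.single i 1

/-- the derivation `∂^{e_i} F = Σ_p 𝒴_{(𝓘,p+e_i)} D_{(𝓘,p)} F` -/
def paD (i : Fin d) (F : NLf d) : NLf d :=
  fun x => ∑ᶠ p : Nd d, x (Typ.In, p + eI i) * Dedge (Typ.In, p) F x

/-- the iterated derivation `∂^k` -/
def paPow (k : Nd d) (F : NLf d) : NLf d :=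
  (List.finRange d).foldr (fun i g => (paD i)^[k i] ∘ g) id F

mutual
  /-- the coherence map `Υ^𝐅` of an extended non-linearity `𝐅 = (F_a)_{a ≤ 0}`:
  `Υ^𝐅[𝟏^a X^k Ξ_L ∏_j 𝓘_{m_j}[τ_j]]
    = (∏_j Υ^𝐅[τ_j]) ⬝ (∂^k ∏_j D_{(𝓘,m_j)} ∏_{l∈L} D_{(Ξ,l)}) F_a` -/
  def Ups (Fam : ℝ → NLf d) : Tr d → NLf d
    | .node a k L B => fun x =>
        UpsB Fam B x *
          paPow k
            (DList ((B.map fun y => ((Typ.In, y.1) : ET d)) ++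
              L.map fun l => ((Typ.Xi, l) : ET d)) (Fam a)) x
  def UpsB (Fam : ℝ → NLf d) : List (Nd d × Tr d) → NLf d
    | [] => fun _ => 1
    | y :: ys => fun x => Ups Fam y.2 x * UpsB Fam ys x
end

/-- a jet `U = Σ_k u_k X^k/k! + Σ_τ u_τ τ/τ!`: a polynomial part and coefficients on
non-polynomial trees -/
structure Jet (d : ℕ) where
  p : Nd d → ℝ
  r : Tr d → ℝ
  poly : ∀ k : Nd d, r (Tr.Xpow k) = 0

/-- the point of `ℝ^ℰ` determined by the polynomial part of a jet -/
def Jet.toE (U : Jet d) : ET d → ℝ :=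
  fun o => match o.1 with
  | Typ.In => U.p o.2
  | Typ.Xi => 0

/-- `𝓘_0[τ]` -/
def plant0 (τ : Tr d) : Tr d := Tr.plant 0 τ

/-- the coefficient, on the basis tree `σ = 𝟏^a X^k Ξ_L ∏_j 𝓘_{m_j}[τ_j]` (relative to
`σ/σ!`), of the jet `𝐅(U) = Σ_{a ≤ 0} 𝓕_a(U) 𝟏^a`, where
`𝓕_a(U) = Σ_{α ∈ ℕ^ℰ} (D^α F_a(U^P, 0)/α!) (U - u, Ξ)^α` is the Taylor lift of `F_a`.
The sum runs over the ways the factors `(𝒟^qU - u_q 𝟏)` can contribute a polynomial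
`u_m X^{m-q}/(m-q)!` (recorded as a list `P` of pairs `(q, m)`) or a planted tree
`u_{𝓘[τ_j]} 𝓘_{m_j}[τ_j]/τ_j!`. -/
def liftNL (Fam : ℝ → NLf d) (U : Jet d) : Tr d → ℝ :=
  fun σ => match σ with
  | .node a k L B =>
      (ndFact k : ℝ) *
        ∑ᶠ P ∈ {P : List (Nd d × Nd d) |
            (∀ x ∈ P, x.1 ≤ x.2 ∧ x.1 ≠ x.2) ∧ (P.map fun x => x.2 - x.1).sum = k},
          (1 / (P.length.factorial : ℝ)) *
            DList ((P.map fun x => ((Typ.In, x.1) : ET d)) ++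
                (B.map fun y => ((Typ.In, y.1) : ET d)) ++
                L.map fun l => ((Typ.Xi, l) : ET d)) (Fam a) U.toE *
            (P.map fun x => U.p x.2 / (ndFact (x.2 - x.1) : ℝ)).prod *
            (B.map fun y => U.r (plant0 y.2)).prod

/-- the jet `U` solves the algebraic fixed point equation `U = U^P + 𝓘_0[𝐅(U)]` -/
def SolvesFP (Fam : ℝ → NLf d) (U : Jet d) : Prop :=
  (∀ σ : Tr d, U.r σ ≠ 0 → ∃ τ, σ = plant0 τ) ∧
  ∀ τ : Tr d, U.r (plant0 τ) = liftNL Fam U τ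

/-- the jet `U` is coherent with the extended non-linearity `𝐅`:
`U` is of the planted form and `u_{𝓘[τ]} = Υ^𝐅[τ](U^P, 0)` -/
def Coherent (Fam : ℝ → NLf d) (U : Jet d) : Prop :=
  (∀ σ : Tr d, U.r σ ≠ 0 → ∃ τ, σ = plant0 τ) ∧
  ∀ τ : Tr d, U.r (plant0 τ) = Ups Fam τ U.toE

/-- an extended non-linearity `(F_a)_{a ≤ 0}`: indexed by non-positive reals, finitely
many nonzero, each a genuine non-linearity -/
def IsExtNonlin (Fam : ℝ → NLf d) : Prop :=
  (∀ a : ℝ, 0 < a → Fam a = 0) ∧ {a : ℝ | Fam a ≠ 0}.Finite ∧ ∀ a, IsNonlin (Fam a)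

/-!
Let `𝒴_q := 𝒴_{(𝓘, q)}` and `p_q := ∑_{h ≠ 0} 𝒴_{q+h} X^h / h!`, a power series over the algebra of
non-linearities with `p_q(0) = 0`. The normally ordered Taylor lift
`E(G) = ∑_n (1/n!) ∑_{q₁, …, qₙ} p_{q₁} ⋯ p_{qₙ} D_{q₁} ⋯ D_{qₙ} G`
is annihilated by the derivations `∂/∂X_i - ∂^{e_i}`: since
`(∂/∂X_i - ∂^{e_i}) p_q = 𝒴_{q+e_i}` and `∂^{e_i} G = ∑_q 𝒴_{q+e_i} D_q G`, the contributions of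
consecutive orders telescope. Comparing coefficients gives `k! [X^k] E(G) = ∂^k G`. Hence the
coefficients of `𝐅(U)`, expressed through those of `U` on planted trees, obey the recursion over
trees that defines `Υ^𝐅`, and the equivalence follows by induction on trees.
-/

section Nonlinearities

variable {d : ℕ}

theorem Dedge_eq_lineDeriv (o : ET d) (F : NLf d) (x : ET d → ℝ) :
    Dedge o F x = lineDeriv ℝ F x (Pi.single o 1) := by
  have hline : ∀ t : ℝ, Function.update x o (x o + t) = x + t • Pi.single o 1 := fun t => by
    funext o'
    rcases eq_or_ne o' o with rfl | h <;> simp [*]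
  simp only [Dedge, lineDeriv, hline]

theorem hasLineDerivAt_comp_restrict {𝕜 E ι : Type*} [NontriviallyNormedField 𝕜]
    [NormedAddCommGroup E] [NormedSpace 𝕜 E] {S : Finset ι} {f : (S → 𝕜) → E} {x : ι → 𝕜}
    (hf : DifferentiableAt 𝕜 f (S.restrict x)) (v : ι → 𝕜) :
    HasLineDerivAt 𝕜 (f ∘ S.restrict) (fderiv 𝕜 f (S.restrict x) (S.restrict v)) x v :=
  hf.hasFDerivAt.hasLineDerivAt (S.restrict v)

theorem isNonlin_iff {F : NLf d} :
    IsNonlin F ↔ ∃ (S : Finset (ET d)) (f : (S → ℝ) → ℝ),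
      ContDiff ℝ (⊤ : ℕ∞) f ∧ F = f ∘ S.restrict := by
  simp only [IsNonlin, funext_iff]
  rfl

theorem IsNonlin.exists_common_restrict {F G : NLf d} (hF : IsNonlin F) (hG : IsNonlin G) :
    ∃ (S : Finset (ET d)) (f g : (S → ℝ) → ℝ), ContDiff ℝ (⊤ : ℕ∞) f ∧ ContDiff ℝ (⊤ : ℕ∞) g ∧
      F = f ∘ S.restrict ∧ G = g ∘ S.restrict := by
  obtain ⟨S, f, hf, rfl⟩ := isNonlin_iff.1 hF
  obtain ⟨T, g, hg, rfl⟩ := isNonlin_iff.1 hG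
  have hrestrict : ∀ {A : Finset (ET d)} (h : A ⊆ S ∪ T),
      ContDiff ℝ (⊤ : ℕ∞) (Finset.restrict₂ (π := fun _ => ℝ) h) := fun h =>
    contDiff_pi.2 fun o => contDiff_apply ℝ ℝ (⟨o.1, h o.2⟩ : ↥(S ∪ T))
  exact ⟨S ∪ T, _, _, hf.comp (hrestrict Finset.subset_union_left),
    hg.comp (hrestrict Finset.subset_union_right), rfl, rfl⟩

theorem IsNonlin.add {F G : NLf d} (hF : IsNonlin F) (hG : IsNonlin G) : IsNonlin (F + G) := by
  obtain ⟨S, f, g, hf, hg, rfl, rfl⟩ := hF.exists_common_restrict hG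
  exact isNonlin_iff.2 ⟨S, f + g, hf.add hg, rfl⟩

theorem IsNonlin.mul {F G : NLf d} (hF : IsNonlin F) (hG : IsNonlin G) : IsNonlin (F * G) := by
  obtain ⟨S, f, g, hf, hg, rfl, rfl⟩ := hF.exists_common_restrict hG
  exact isNonlin_iff.2 ⟨S, f * g, hf.mul hg, rfl⟩

theorem isNonlin_const (c : ℝ) : IsNonlin (fun _ : ET d → ℝ => c) :=
  ⟨∅, fun _ => c, contDiff_const, fun _ => rfl⟩

theorem isNonlin_coord (o : ET d) : IsNonlin fun x : ET d → ℝ => x o :=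
  ⟨{o}, fun y => y ⟨o, Finset.mem_singleton_self o⟩, contDiff_apply ℝ ℝ _, fun _ => rfl⟩

theorem IsNonlin.lineDifferentiableAt {F : NLf d} (hF : IsNonlin F) (x v : ET d → ℝ) :
    LineDifferentiableAt ℝ F x v := by
  obtain ⟨S, f, hf, rfl⟩ := isNonlin_iff.1 hF
  exact (hasLineDerivAt_comp_restrict (hf.differentiable (by simp) _) v).lineDifferentiableAt

theorem Dedge_comp_restrict {S : Finset (ET d)} {f : (S → ℝ) → ℝ} (hf : Differentiable ℝ f)
    (o : ET d) :
    Dedge o (f ∘ S.restrict) =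
      (fun y => fderiv ℝ f y (S.restrict (π := fun _ => ℝ) (Pi.single o 1))) ∘ S.restrict :=
  funext fun x => (Dedge_eq_lineDeriv o _ x).trans (hasLineDerivAt_comp_restrict (hf _) _).lineDeriv

theorem contDiff_fderiv_apply {𝕜 E F : Type*} [NontriviallyNormedField 𝕜] [NormedAddCommGroup E]
    [NormedSpace 𝕜 E] [NormedAddCommGroup F] [NormedSpace 𝕜 F] {f : E → F}
    (hf : ContDiff 𝕜 (⊤ : ℕ∞) f) (v : E) : ContDiff 𝕜 (⊤ : ℕ∞) fun y => fderiv 𝕜 f y v :=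
  (hf.fderiv_right (m := (⊤ : ℕ∞)) (by simp)).clm_apply contDiff_const

theorem IsNonlin.dedge {F : NLf d} (hF : IsNonlin F) (o : ET d) : IsNonlin (Dedge o F) := by
  obtain ⟨S, f, hf, rfl⟩ := isNonlin_iff.1 hF
  exact isNonlin_iff.2
    ⟨S, _, contDiff_fderiv_apply hf _, Dedge_comp_restrict (hf.differentiable (by simp)) o⟩

theorem IsNonlin.dedge_comm {F : NLf d} (hF : IsNonlin F) (o o' : ET d) :
    Dedge o (Dedge o' F) = Dedge o' (Dedge o F) := by
  obtain ⟨S, f, hf, rfl⟩ := isNonlin_iff.1 hF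
  have hdiff : Differentiable ℝ f := hf.differentiable (by simp)
  have hdiff' : ∀ v, Differentiable ℝ fun y => fderiv ℝ f y v := fun v =>
    (contDiff_fderiv_apply hf v).differentiable (by simp)
  have hfderiv : Differentiable ℝ (fderiv ℝ f) :=
    (hf.fderiv_right (m := (⊤ : ℕ∞)) (by simp)).differentiable (by simp)
  simp only [Dedge_comp_restrict hdiff, Dedge_comp_restrict (hdiff' _)]
  funext x
  have hsymm : IsSymmSndFDerivAt ℝ f (S.restrict x) :=
    hf.contDiffAt.isSymmSndFDerivAt (by
      rw [minSmoothness_of_isRCLikeNormedField]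
      exact WithTop.coe_le_coe.2 (le_top : (2 : ℕ∞) ≤ ⊤))
  simpa [fderiv_clm_apply (hfderiv _) (differentiableAt_const _)] using hsymm.eq _ _

theorem Dedge_add {F G : NLf d} (hF : IsNonlin F) (hG : IsNonlin G) (o : ET d) :
    Dedge o (F + G) = Dedge o F + Dedge o G := by
  funext x
  simp only [Dedge_eq_lineDeriv, Pi.add_apply]
  exact deriv_add (hF.lineDifferentiableAt x _) (hG.lineDifferentiableAt x _)

theorem Dedge_mul {F G : NLf d} (hF : IsNonlin F) (hG : IsNonlin G) (o : ET d) :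
    Dedge o (F * G) = F * Dedge o G + G * Dedge o F := by
  funext x
  simp only [Dedge_eq_lineDeriv, Pi.add_apply, Pi.mul_apply]
  refine (deriv_mul (hF.lineDifferentiableAt x _) (hG.lineDifferentiableAt x _)).trans ?_
  simp only [zero_smul, add_zero, lineDeriv]
  ring

theorem Dedge_smul (c : ℝ) (F : NLf d) (o : ET d) : Dedge o (c • F) = c • Dedge o F :=
  funext fun _ => deriv_const_smul_field c _

theorem Dedge_coord (o o' : ET d) :
    Dedge o (fun x => x o') = fun _ => if o = o' then 1 else 0 := by
  funext x
  rcases eq_or_ne o o' with rfl | h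
  · simp [Dedge]
  · simp [Dedge, h, h.symm]

theorem Dedge_eq_zero_of_dependsOn {S : Set (ET d)} {F : NLf d} (hF : DependsOn F S) {o : ET d}
    (ho : o ∉ S) : Dedge o F = 0 := by
  funext x
  have hconst : ∀ t : ℝ, F (Function.update x o (x o + t)) = F x := fun t =>
    hF fun o' ho' => Function.update_of_ne (ne_of_mem_of_not_mem ho' ho) _ _
  simp [Dedge, hconst]

theorem dependsOn_dedge {S : Set (ET d)} {F : NLf d} (hF : DependsOn F S) (o : ET d) :
    DependsOn (Dedge o F) S := by
  intro x y hxy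
  have hline : ∀ t : ℝ,
      F (Function.update x o (x o + t)) = F (Function.update y o (y o + t)) := fun t =>
    hF fun o' ho' => by rcases eq_or_ne o' o with rfl | h <;> simp [*]
  simp only [Dedge, hline]

theorem IsNonlin.exists_common_dependsOn {F G : NLf d} (hF : IsNonlin F) (hG : IsNonlin G) :
    ∃ S : Finset (ET d), DependsOn F S ∧ DependsOn G S := by
  obtain ⟨S, f, g, -, -, rfl, rfl⟩ := hF.exists_common_restrict hG
  have hdep : ∀ h : (S → ℝ) → ℝ, DependsOn (h ∘ S.restrict (π := fun _ => ℝ)) (S : Set (ET d)) :=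
    fun h _ _ hxy => congrArg h (funext fun o => hxy o.1 o.2)
  exact ⟨S, hdep f, hdep g⟩

theorem IsNonlin.exists_dependsOn {F : NLf d} (hF : IsNonlin F) :
    ∃ S : Finset (ET d), DependsOn F S :=
  (hF.exists_common_dependsOn hF).imp fun _ => And.left

end Nonlinearities

section NonlinAlgebra

variable {d : ℕ}

/-- The algebra of non-linearities under pointwise operations. -/
def nonlin (d : ℕ) : Subalgebra ℝ (NLf d) where
  carrier := {F | IsNonlin F}
  add_mem' := IsNonlin.add
  mul_mem' := IsNonlin.mul
  algebraMap_mem' := isNonlin_const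

/-- The evaluation `𝒴_o` of the coordinate `o`, as an element of the algebra of
non-linearities. -/
def coord (o : ET d) : nonlin d := ⟨fun x => x o, isNonlin_coord o⟩

/-- The partial derivative `D_o` as a derivation of the algebra of non-linearities. -/
def partialDeriv (o : ET d) : Derivation ℝ (nonlin d) (nonlin d) :=
  Derivation.mk'
    { toFun := fun F => ⟨Dedge o F, F.2.dedge o⟩
      map_add' := fun F G => Subtype.ext (Dedge_add F.2 G.2 o)
      map_smul' := fun c F => Subtype.ext (Dedge_smul c F o) }
    fun F G => Subtype.ext (Dedge_mul F.2 G.2 o)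

@[simp] theorem coe_partialDeriv (o : ET d) (F : nonlin d) :
    (partialDeriv o F : NLf d) = Dedge o F := rfl

theorem partialDeriv_commute (o o' : ET d) :
    Function.Commute (partialDeriv o) (partialDeriv o') := fun F =>
  Subtype.ext (F.2.dedge_comm o o')

/-- The multi-indices `q` with `(𝓘, q) ∈ S`. -/
def inIndices (S : Finset (ET d)) : Finset (Nd d) :=
  S.preimage (Prod.mk Typ.In) (Prod.mk_right_injective _).injOn

theorem mem_inIndices {S : Finset (ET d)} {q : Nd d} :
    q ∈ inIndices S ↔ (Typ.In, q) ∈ S := Finset.mem_preimage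

theorem paD_eq_sum {S : Finset (ET d)} {F : NLf d} (hF : DependsOn F S) (i : Fin d)
    (x : ET d → ℝ) :
    paD i F x = ∑ q ∈ inIndices S, x (Typ.In, q + eI i) * Dedge (Typ.In, q) F x := by
  refine finsum_eq_sum_of_support_subset _ fun q hq => ?_
  by_contra hqS
  refine hq ?_
  simp [Dedge_eq_zero_of_dependsOn hF (mt mem_inIndices.2 hqS)]

theorem paD_eq_sum_coord_mul {S : Finset (ET d)} {F : nonlin d} (hF : DependsOn (F : NLf d) S)
    (i : Fin d) : paD i F =
      ↑(∑ q ∈ inIndices S, coord (Typ.In, q + eI i) * partialDeriv (Typ.In, q) F) := by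
  funext x
  simp [paD_eq_sum hF, coord]

theorem IsNonlin.paD {F : NLf d} (hF : IsNonlin F) (i : Fin d) : IsNonlin (paD i F) := by
  obtain ⟨S, hS⟩ := hF.exists_dependsOn
  exact paD_eq_sum_coord_mul (F := ⟨F, hF⟩) hS i ▸ Subtype.property _

theorem paD_add {F G : NLf d} (hF : IsNonlin F) (hG : IsNonlin G) (i : Fin d) :
    paD i (F + G) = paD i F + paD i G := by
  obtain ⟨S, hFS, hGS⟩ := hF.exists_common_dependsOn hG
  have hS : DependsOn (F + G) S := fun x y h => congrArg₂ (· + ·) (hFS h) (hGS h)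
  funext x
  simp [paD_eq_sum hS, paD_eq_sum hFS, paD_eq_sum hGS, Dedge_add hF hG, mul_add,
    Finset.sum_add_distrib]

theorem paD_mul {F G : NLf d} (hF : IsNonlin F) (hG : IsNonlin G) (i : Fin d) :
    paD i (F * G) = F * paD i G + G * paD i F := by
  obtain ⟨S, hFS, hGS⟩ := hF.exists_common_dependsOn hG
  have hS : DependsOn (F * G) S := fun x y h => congrArg₂ (· * ·) (hFS h) (hGS h)
  funext x
  simp [paD_eq_sum hS, paD_eq_sum hFS, paD_eq_sum hGS, Dedge_mul hF hG, mul_add,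
    Finset.sum_add_distrib, Finset.mul_sum, mul_left_comm]

theorem paD_smul (c : ℝ) {F : NLf d} (hF : IsNonlin F) (i : Fin d) :
    paD i (c • F) = c • paD i F := by
  obtain ⟨S, hS⟩ := hF.exists_dependsOn
  have hcS : DependsOn (c • F) S := fun x y h => congrArg (c • ·) (hS h)
  funext x
  simp [paD_eq_sum hcS, paD_eq_sum hS, Dedge_smul, Finset.mul_sum, mul_left_comm]

/-- The derivation `∂^{e_i}` of the algebra of non-linearities. -/
def totalDeriv (i : Fin d) : Derivation ℝ (nonlin d) (nonlin d) :=
  Derivation.mk'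
    { toFun := fun F => ⟨paD i F, F.2.paD i⟩
      map_add' := fun F G => Subtype.ext (paD_add F.2 G.2 i)
      map_smul' := fun c F => Subtype.ext (paD_smul c F.2 i) }
    fun F G => Subtype.ext (paD_mul F.2 G.2 i)

theorem totalDeriv_eq_sum {S : Finset (ET d)} {F : nonlin d} (hF : DependsOn (F : NLf d) S)
    (i : Fin d) : totalDeriv i F =
      ∑ q ∈ inIndices S, coord (Typ.In, q + eI i) * partialDeriv (Typ.In, q) F :=
  Subtype.ext (paD_eq_sum_coord_mul hF i)

theorem paD_coord (i : Fin d) (m : Nd d) :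
    paD i (fun x => x (Typ.In, m)) = fun x => x (Typ.In, m + eI i) := by
  funext x
  simp only [paD, Dedge_coord]
  refine (finsum_eq_single _ m fun p hp => ?_).trans ?_ <;> simp [*]

theorem totalDeriv_coord (i : Fin d) (m : Nd d) :
    totalDeriv i (coord (Typ.In, m)) = coord (Typ.In, m + eI i) :=
  Subtype.ext (paD_coord i m)

end NonlinAlgebra

section NormalOrderedTaylor

variable {A ι R : Type*} [CommRing R]

/-- The normally ordered power `∑_{q₁, …, qₙ ∈ Q} p_{q₁} ⋯ p_{qₙ} c(D_{qₙ} ⋯ D_{q₁} G)`, which is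
`n!` times the `n`-th order term of the Taylor expansion of `G` in the directions `D` with
increments `p`. -/
def taylorTerm (Q : Finset ι) (D : ι → A → A) (c : A → R) (p : ι → R) : ℕ → A → R
  | 0, G => c G
  | n + 1, G => ∑ q ∈ Q, p q * taylorTerm Q D c p n (D q G)

/-- The sum of the terms `taylorTerm n (D_q G)` weighted by `w`; for `w = δ p` it is what a
derivation `δ` produces by hitting one increment of `taylorTerm (n + 1) G`. -/
def taylorShift (Q : Finset ι) (D : ι → A → A) (c : A → R) (p w : ι → R) (n : ℕ) (G : A) : R :=
  ∑ q ∈ Q, w q * taylorTerm Q D c p n (D q G)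

/-- The Taylor polynomial `∑_{n ≤ N} taylorTerm n / n!`, with coefficients in the field `𝕜`. -/
def taylorPoly (𝕜 : Type*) [Field 𝕜] [Algebra 𝕜 R] (Q : Finset ι) (D : ι → A → A) (c : A → R)
    (p : ι → R) (N : ℕ) (G : A) : R :=
  ∑ n ∈ Finset.range (N + 1), (n.factorial : 𝕜)⁻¹ • taylorTerm Q D c p n G

variable {Q : Finset ι} {D : ι → A → A} {c : A → R} {p w : ι → R}

theorem taylorShift_succ (hD : ∀ q q', Function.Commute (D q) (D q')) (n : ℕ) (G : A) :
    taylorShift Q D c p w (n + 1) G = ∑ q ∈ Q, p q * taylorShift Q D c p w n (D q G) := by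
  simp only [taylorShift, taylorTerm, Finset.mul_sum]
  rw [Finset.sum_comm]
  refine Finset.sum_congr rfl fun q _ => Finset.sum_congr rfl fun q' _ => ?_
  rw [(hD q q').eq, mul_left_comm]

theorem derivation_taylorTerm {𝕜 : Type*} [CommSemiring 𝕜] [Algebra 𝕜 R]
    (hD : ∀ q q', Function.Commute (D q) (D q')) (δ : Derivation 𝕜 R R) (hp : ∀ q, δ (p q) = w q)
    {M : Set A} (hM : ∀ q, Set.MapsTo (D q) M M)
    (hc : ∀ G ∈ M, δ (c G) = -∑ q ∈ Q, w q * c (D q G)) (n : ℕ) :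
    ∀ G ∈ M, δ (taylorTerm Q D c p n G) =
      n • taylorShift Q D c p w (n - 1) G - taylorShift Q D c p w n G := by
  induction n with
  | zero => exact fun G hG => by simp [taylorTerm, taylorShift, hc G hG]
  | succ n ih =>
    intro G hG
    have hlower : ∑ q ∈ Q, p q * n • taylorShift Q D c p w (n - 1) (D q G) =
        n • taylorShift Q D c p w n G := by
      cases n with
      | zero => simp
      | succ n => simp only [Nat.add_sub_cancel, mul_smul_comm, ← Finset.smul_sum,
          ← taylorShift_succ hD]
    calc δ (taylorTerm Q D c p (n + 1) G)
        = ∑ q ∈ Q, (p q * (n • taylorShift Q D c p w (n - 1) (D q G)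
            - taylorShift Q D c p w n (D q G)) + w q * taylorTerm Q D c p n (D q G)) := by
          simp only [taylorTerm, map_sum, Derivation.leibniz, smul_eq_mul, hp,
            ih _ (hM _ hG), mul_comm (w _)]
      _ = n • taylorShift Q D c p w n G - taylorShift Q D c p w (n + 1) G
            + taylorShift Q D c p w n G := by
          simp only [mul_sub, Finset.sum_add_distrib, Finset.sum_sub_distrib, hlower,
            ← taylorShift_succ hD]
          rfl
      _ = _ := by
          simp only [Nat.add_sub_cancel, succ_nsmul]
          abel

theorem derivation_taylorPoly {𝕜 : Type*} [Field 𝕜] [CharZero 𝕜] [Algebra 𝕜 R]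
    (hD : ∀ q q', Function.Commute (D q) (D q')) (δ : Derivation 𝕜 R R) (hp : ∀ q, δ (p q) = w q)
    {M : Set A} (hM : ∀ q, Set.MapsTo (D q) M M)
    (hc : ∀ G ∈ M, δ (c G) = -∑ q ∈ Q, w q * c (D q G)) (N : ℕ) {G : A} (hG : G ∈ M) :
    δ (taylorPoly 𝕜 Q D c p N G) = -((N.factorial : 𝕜)⁻¹ • taylorShift Q D c p w N G) := by
  simp only [taylorPoly, map_sum, δ.map_smul, derivation_taylorTerm hD δ hp hM hc _ G hG]
  induction N with
  | zero => simp
  | succ N ih =>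
    have hfact : ((N + 1).factorial : 𝕜)⁻¹ * ((N + 1 : ℕ) : 𝕜) = (N.factorial : 𝕜)⁻¹ := by
      rw [Nat.factorial_succ, Nat.cast_mul, mul_inv_rev, inv_mul_cancel_right₀]
      exact Nat.cast_ne_zero.2 N.succ_ne_zero
    rw [Finset.sum_range_succ, ih, smul_sub, ← Nat.cast_smul_eq_nsmul 𝕜, smul_smul, hfact,
      Nat.add_sub_cancel]
    abel

end NormalOrderedTaylor

section PowerSeries

open MvPowerSeries

variable {σ A : Type*} [CommRing A]

theorem coeff_algebra_smul {𝕜 : Type*} [CommSemiring 𝕜] [Algebra 𝕜 A] (r : 𝕜)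
    (f : MvPowerSeries σ A) (k : σ →₀ ℕ) : coeff k (r • f) = r • coeff k f := rfl

theorem le_order_taylorTerm {B ι : Type*} {Q : Finset ι} {D : ι → B → B}
    {c : B → MvPowerSeries σ A} {p : ι → MvPowerSeries σ A}
    (hp : ∀ q, constantCoeff (p q) = 0) (n : ℕ) (G : B) :
    (n : ℕ∞) ≤ (taylorTerm Q D c p n G).order := by
  induction n generalizing G with
  | zero => simp
  | succ n ih =>
    refine Finset.sum_induction _ (fun f : MvPowerSeries σ A => ((n + 1 : ℕ) : ℕ∞) ≤ f.order)
      (fun f g hf hg => (le_min hf hg).trans min_order_le_add) (by simp) fun q _ => ?_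
    calc ((n + 1 : ℕ) : ℕ∞) = 1 + n := by push_cast; ring
      _ ≤ (p q).order + (taylorTerm Q D c p n (D q G)).order :=
        add_le_add (one_le_order_iff_constCoeff_eq_zero.2 (hp q)) (ih _)
      _ ≤ _ := le_order_mul

theorem coeff_taylorTerm_of_degree_lt {B ι : Type*} {Q : Finset ι} {D : ι → B → B}
    {c : B → MvPowerSeries σ A} {p : ι → MvPowerSeries σ A} (hp : ∀ q, constantCoeff (p q) = 0)
    {k : σ →₀ ℕ} {n : ℕ} (hn : k.degree < n) (G : B) : coeff k (taylorTerm Q D c p n G) = 0 :=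
  coeff_of_lt_order ((Nat.cast_lt.2 hn).trans_le (le_order_taylorTerm hp n G))

theorem coeff_taylorPoly_of_degree_le {𝕜 B ι : Type*} [Field 𝕜] [Algebra 𝕜 A] {Q : Finset ι}
    {D : ι → B → B} {c : B → MvPowerSeries σ A} {p : ι → MvPowerSeries σ A}
    (hp : ∀ q, constantCoeff (p q) = 0) {k : σ →₀ ℕ} {N : ℕ} (hN : k.degree ≤ N) (G : B) :
    coeff k (taylorPoly 𝕜 Q D c p N G) = coeff k (taylorPoly 𝕜 Q D c p k.degree G) := by
  rw [taylorPoly, taylorPoly, map_sum, map_sum]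
  refine (Finset.sum_subset (Finset.range_mono (by lia)) fun n _ hn => ?_).symm
  rw [coeff_algebra_smul, coeff_taylorTerm_of_degree_lt hp (by simpa using hn), smul_zero]

/-- The coefficientwise action of a derivation of the coefficient ring on power series, the
analogue of `Derivation.mapCoeffs` for polynomials. -/
def mapCoeffs {𝕜 : Type*} [CommRing 𝕜] [Algebra 𝕜 A] (δ : Derivation 𝕜 A A) :
    Derivation 𝕜 (MvPowerSeries σ A) (MvPowerSeries σ A) :=
  Derivation.mk'
    { toFun := fun f k => δ (coeff k f)
      map_add' := fun f g => funext fun k => map_add δ (coeff k f) (coeff k g)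
      map_smul' := fun r f => funext fun k => δ.map_smul r (coeff k f) }
    fun f g => by
      ext k
      change δ (coeff k (f * g)) = coeff k (f * _ + g * _)
      rw [mul_comm g, map_add, coeff_mul, coeff_mul, coeff_mul, map_sum, ← Finset.sum_add_distrib]
      refine Finset.sum_congr rfl fun x _ => ?_
      rw [δ.leibniz, smul_eq_mul, smul_eq_mul, mul_comm (coeff x.2 g)]
      rfl

theorem coeff_mapCoeffs {𝕜 : Type*} [CommRing 𝕜] [Algebra 𝕜 A] (δ : Derivation 𝕜 A A)
    (f : MvPowerSeries σ A) (k : σ →₀ ℕ) : coeff k (mapCoeffs δ f) = δ (coeff k f) := rfl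

theorem mapCoeffs_C {𝕜 : Type*} [CommRing 𝕜] [Algebra 𝕜 A] (δ : Derivation 𝕜 A A) (r : A) :
    mapCoeffs δ (C r : MvPowerSeries σ A) = C (δ r) := by
  ext k
  simp only [coeff_mapCoeffs, coeff_C, apply_ite δ, map_zero]

end PowerSeries

section TaylorLift

open MvPowerSeries

variable {d : ℕ}

/-- The multi-index `k ∈ ℕ^d` as an exponent of a formal power series. -/
def toExponent (k : Nd d) : Fin d →₀ ℕ := Finsupp.equivFunOnFinite.symm k

@[simp] theorem coe_toExponent (k : Nd d) : ⇑(toExponent k) = k := rfl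

@[simp] theorem toExponent_coe (k : Fin d →₀ ℕ) : toExponent ⇑k = k :=
  Finsupp.equivFunOnFinite_symm_coe k

theorem toExponent_add_eI (k : Nd d) (i : Fin d) :
    toExponent (k + eI i) = toExponent k + Finsupp.single i 1 :=
  DFunLike.coe_injective <| by simp [eI, Finsupp.single_eq_pi_single]

theorem ndFact_add_eI (k : Nd d) (i : Fin d) : ndFact (k + eI i) = (k i + 1) * ndFact k := by
  have hfactor : ∀ j, ((k + eI i) j).factorial = (if j = i then k j + 1 else 1) * (k j).factorial :=
    fun j => by rcases eq_or_ne j i with rfl | h <;> simp [eI, Nat.factorial_succ, *]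
  simp only [ndFact, hfactor, Finset.prod_mul_distrib, Finset.prod_ite_eq', Finset.mem_univ,
    if_true]

/-- The increment `𝒟^q U - u_q 𝟏 = ∑_{h ≠ 0} u_{q+h} X^h / h!` of the polynomial part of a generic
jet, with the evaluations `𝒴_{(𝓘, m)}` in place of the coefficients `u_m`. -/
def jetTail (q : Nd d) : MvPowerSeries (Fin d) (nonlin d) := fun h =>
  if h = 0 then 0 else (ndFact ⇑h : ℝ)⁻¹ • coord (Typ.In, q + ⇑h)

theorem coeff_jetTail (q : Nd d) (h : Fin d →₀ ℕ) :
    coeff h (jetTail q) = if h = 0 then 0 else (ndFact ⇑h : ℝ)⁻¹ • coord (Typ.In, q + ⇑h) := rfl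

/-- The derivation `∂/∂X_i - ∂^{e_i}` of formal power series over the non-linearities. -/
def horizontalDeriv (i : Fin d) : Derivation ℝ (MvPowerSeries (Fin d) (nonlin d))
    (MvPowerSeries (Fin d) (nonlin d)) :=
  (pderiv (nonlin d) i).restrictScalars ℝ - mapCoeffs (totalDeriv i)

theorem coeff_horizontalDeriv (i : Fin d) (f : MvPowerSeries (Fin d) (nonlin d))
    (k : Fin d →₀ ℕ) : coeff k (horizontalDeriv i f) =
      (k i + 1 : ℝ) • coeff (k + Finsupp.single i 1) f - totalDeriv i (coeff k f) := by
  have hscalar : (k i + 1 : nonlin d) = algebraMap ℝ (nonlin d) (k i + 1) := by simp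
  change coeff k (pderiv (nonlin d) i f) - coeff k (mapCoeffs (totalDeriv i) f) = _
  rw [coeff_pderiv, coeff_mapCoeffs, hscalar, mul_comm, Algebra.smul_def]

theorem horizontalDeriv_jetTail (i : Fin d) (q : Nd d) :
    horizontalDeriv i (jetTail q) = C (coord (Typ.In, q + eI i)) := by
  ext1 k
  have hne : k + Finsupp.single i 1 ≠ 0 := by simp
  have hcoe : ((k + Finsupp.single i 1 : Fin d →₀ ℕ) : Nd d) = ⇑k + eI i := by
    simp [eI, Finsupp.single_eq_pi_single]
  have hfact : (k i + 1 : ℝ) * (ndFact (⇑k + eI i) : ℝ)⁻¹ = (ndFact ⇑k : ℝ)⁻¹ := by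
    rw [ndFact_add_eI]
    push_cast
    field_simp
  rw [coeff_horizontalDeriv, coeff_jetTail, coeff_jetTail, if_neg hne, hcoe, smul_smul, hfact,
    coeff_C]
  split_ifs with hk
  · simp [hk, ndFact]
  · rw [Derivation.map_smul, totalDeriv_coord, add_assoc, sub_self]

theorem horizontalDeriv_C {S : Finset (ET d)} {G : nonlin d} (hG : DependsOn (G : NLf d) S)
    (i : Fin d) : horizontalDeriv i (C G) = -∑ q ∈ inIndices S,
      C (coord (Typ.In, q + eI i)) * C (partialDeriv (Typ.In, q) G) := by
  change pderiv (nonlin d) i (C G) - mapCoeffs (totalDeriv i) (C G) = _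
  rw [pderiv_C, mapCoeffs_C, totalDeriv_eq_sum hG, zero_sub]
  simp only [map_sum, map_mul]

/-- The Taylor lift of `G` at a generic polynomial jet, truncated after order `N`. -/
abbrev taylorLift (S : Finset (ET d)) (N : ℕ) (G : nonlin d) : MvPowerSeries (Fin d) (nonlin d) :=
  taylorPoly ℝ (inIndices S) (fun q => partialDeriv (Typ.In, q)) C jetTail N G

theorem constantCoeff_jetTail (q : Nd d) : constantCoeff (jetTail q) = 0 := by
  rw [← coeff_zero_eq_constantCoeff_apply, coeff_jetTail, if_pos rfl]

theorem horizontalDeriv_taylorLift {S : Finset (ET d)} {G : nonlin d}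
    (hG : DependsOn (G : NLf d) S) (i : Fin d) (N : ℕ) :
    horizontalDeriv i (taylorLift S N G) =
      -((N.factorial : ℝ)⁻¹ • taylorShift (inIndices S) (fun q => partialDeriv (Typ.In, q)) C
        jetTail (fun q => C (coord (Typ.In, q + eI i))) N G) :=
  derivation_taylorPoly (M := {F : nonlin d | DependsOn (F : NLf d) S})
    (fun _ _ => partialDeriv_commute _ _) (horizontalDeriv i) (horizontalDeriv_jetTail i)
    (fun q _ => fun hF : DependsOn (Subtype.val _ : NLf d) S => dependsOn_dedge hF (Typ.In, q))
    (fun _ hF => horizontalDeriv_C hF i) N hG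

theorem coeff_add_single_taylorLift {S : Finset (ET d)} {G : nonlin d}
    (hG : DependsOn (G : NLf d) S) (i : Fin d) {N : ℕ} {k : Fin d →₀ ℕ} (hk : k.degree < N) :
    (k i + 1 : ℝ) • coeff (k + Finsupp.single i 1) (taylorLift S N G) =
      totalDeriv i (coeff k (taylorLift S N G)) := by
  have hremainder : coeff k (horizontalDeriv i (taylorLift S N G)) = 0 := by
    rw [horizontalDeriv_taylorLift hG, map_neg, coeff_algebra_smul, taylorShift, map_sum,
      Finset.sum_eq_zero, smul_zero, neg_zero]
    intro q _
    rw [coeff_C_mul, coeff_taylorTerm_of_degree_lt (p := jetTail) constantCoeff_jetTail hk,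
      mul_zero]
  rwa [coeff_horizontalDeriv, sub_eq_zero] at hremainder

theorem iterate_paD_eq {Φ : Nd d → NLf d} (hΦ : ∀ i k, paD i (Φ k) = Φ (k + eI i)) (i : Fin d)
    (n : ℕ) (k : Nd d) : (paD i)^[n] (Φ k) = Φ (k + n • eI i) := by
  induction n with
  | zero => simp
  | succ n ih => rw [Function.iterate_succ_apply', ih, hΦ, succ_nsmul, add_assoc]

theorem paPow_eq_of_paD_eq {Φ : Nd d → NLf d} (hΦ : ∀ i k, paD i (Φ k) = Φ (k + eI i)) (k : Nd d) :
    paPow k (Φ 0) = Φ k := by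
  have hfold : ∀ l : List (Fin d), l.foldr (fun i g => (paD i)^[k i] ∘ g) id (Φ 0) =
      Φ (l.map fun i => k i • eI i).sum := fun l => by
    induction l with
    | nil => rfl
    | cons i l ih =>
      rw [List.foldr_cons, Function.comp_apply, ih, iterate_paD_eq hΦ, List.map_cons,
        List.sum_cons, add_comm]
  have hsum : ((List.finRange d).map fun i => k i • eI i).sum = k := by
    rw [← List.ofFn_eq_map, List.sum_ofFn]
    funext j
    simp [eI, Pi.single_apply]
  rw [paPow, hfold, hsum]

theorem paPow_eq_coeff_taylorLift {S : Finset (ET d)} {G : nonlin d}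
    (hG : DependsOn (G : NLf d) S) (k : Fin d →₀ ℕ) :
    paPow ⇑k (G : NLf d) =
      ((ndFact ⇑k : ℝ) • coeff k (taylorLift S k.degree G) : nonlin d) := by
  let Φ : Nd d → nonlin d := fun k =>
    (ndFact k : ℝ) • coeff (toExponent k) (taylorLift S (toExponent k).degree G)
  have hΦ : ∀ i k, totalDeriv i (Φ k) = Φ (k + eI i) := fun i k => by
    have hstable : ∀ j : Fin d →₀ ℕ, j.degree ≤ (toExponent k).degree + 1 →
        coeff j (taylorLift S j.degree G) =
          coeff j (taylorLift S ((toExponent k).degree + 1) G) := fun j hj =>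
      (coeff_taylorPoly_of_degree_le constantCoeff_jetTail hj G).symm
    have hdegree : (toExponent k + Finsupp.single i 1).degree ≤ (toExponent k).degree + 1 := by
      simp
    simp only [Φ, Derivation.map_smul, toExponent_add_eI]
    rw [hstable _ hdegree, hstable _ (Nat.le_succ _),
      ← coeff_add_single_taylorLift hG i (Nat.lt_succ_self _), smul_smul, ndFact_add_eI]
    push_cast
    rw [mul_comm, coe_toExponent]
  have hzero : Φ 0 = G := by
    have hexponent : toExponent (0 : Nd d) = 0 := DFunLike.coe_injective rfl
    simp [Φ, hexponent, taylorPoly, taylorTerm, ndFact]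
  have := paPow_eq_of_paD_eq (Φ := fun k => Φ k) (fun i k => congrArg Subtype.val (hΦ i k)) ⇑k
  simpa only [hzero, Φ, toExponent_coe] using this

end TaylorLift

section Lists

open MvPowerSeries
open Finset.HasAntidiagonal (antidiagonal mem_antidiagonal)

variable {d : ℕ}

theorem DList_append (os os' : List (ET d)) (F : NLf d) :
    DList (os ++ os') F = DList os (DList os' F) := List.foldr_append

theorem IsNonlin.dList {F : NLf d} (hF : IsNonlin F) (os : List (ET d)) :
    IsNonlin (DList os F) := by
  induction os with
  | nil => exact hF
  | cons o os ih => exact ih.dedge o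

theorem IsNonlin.dList_dedge {F : NLf d} (hF : IsNonlin F) (os : List (ET d)) (o : ET d) :
    DList os (Dedge o F) = Dedge o (DList os F) := by
  induction os with
  | nil => rfl
  | cons o' os ih => exact (congrArg (Dedge o') ih).trans ((hF.dList os).dedge_comm o' o)

theorem DList_zero (os : List (ET d)) : DList os (0 : NLf d) = 0 := by
  induction os with
  | nil => rfl
  | cons o os ih => exact (congrArg (Dedge o) ih).trans (by simpa using Dedge_smul 0 0 o)

theorem IsNonlin.dList_eq_zero {S : Set (ET d)} {F : NLf d} (hF : IsNonlin F)
    (hFS : DependsOn F S) {os : List (ET d)} {o : ET d} (ho : o ∈ os) (hoS : o ∉ S) :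
    DList os F = 0 := by
  obtain ⟨os₁, os₂, rfl⟩ := List.append_of_mem ho
  rw [DList_append]
  change DList os₁ (Dedge o (DList os₂ F)) = 0
  rw [← hF.dList_dedge, Dedge_eq_zero_of_dependsOn hFS hoS, DList_zero, DList_zero]

/-- The lists of `n` pairs `(q, m)` with `q ∈ Q`, `q < m` and `∑ (m - q) = k`, which index the
monomials of the coefficient of `X^k` in the `n`-th order term of the Taylor lift. -/
def pairLists (Q : Finset (Nd d)) : ℕ → (Fin d →₀ ℕ) → Finset (List (Nd d × Nd d))
  | 0, k => if k = 0 then {[]} else ∅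
  | n + 1, k =>
    ((Q ×ˢ (antidiagonal k).filter fun z => z.1 ≠ 0).sigma fun y =>
      pairLists Q n y.2.2).image fun y => (y.1.1, y.1.1 + (y.1.2.1 : Nd d)) :: y.2

theorem mem_pairLists {Q : Finset (Nd d)} {n : ℕ} {k : Fin d →₀ ℕ} {P : List (Nd d × Nd d)} :
    P ∈ pairLists Q n k ↔ P.length = n ∧ (∀ x ∈ P, x.1 ∈ Q) ∧
      (∀ x ∈ P, x.1 ≤ x.2 ∧ x.1 ≠ x.2) ∧ (P.map fun x => x.2 - x.1).sum = k := by
  induction n generalizing k P with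
  | zero =>
    cases P <;> by_cases hk : k = 0 <;> simp [pairLists, hk, eq_comm (a := (0 : Nd d))]
  | succ n ih =>
    simp only [pairLists, Finset.mem_image, Finset.mem_sigma, Finset.mem_product,
      Finset.mem_filter, mem_antidiagonal, ih]
    constructor
    · rintro ⟨⟨⟨q, h, l⟩, P⟩, ⟨⟨hq, rfl, hh⟩, rfl, hQ, hlt, hl⟩, rfl⟩
      refine ⟨rfl, List.forall_mem_cons.2 ⟨hq, hQ⟩, List.forall_mem_cons.2 ⟨?_, hlt⟩, ?_⟩
      · exact ⟨le_self_add, by simpa using hh⟩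
      · simp [hl]
    · rintro ⟨hn, hQ, hlt, hsum⟩
      obtain ⟨⟨q, m⟩, P, rfl⟩ := List.exists_cons_of_length_eq_add_one hn
      obtain ⟨⟨hqm, hne⟩, hlt⟩ := List.forall_mem_cons.1 hlt
      obtain ⟨hq, hQ⟩ := List.forall_mem_cons.1 hQ
      have hm : q + (m - q) = m := add_tsub_cancel_of_le hqm
      have hmq : m - q ≠ 0 := fun h => hne (by simpa [h] using hm)
      refine ⟨⟨(q, toExponent (m - q), toExponent (P.map fun x => x.2 - x.1).sum), P⟩,
        ⟨⟨hq, DFunLike.coe_injective hsum, fun h => hmq (congrArg DFunLike.coe h)⟩,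
          Nat.succ_injective hn, hQ, hlt, rfl⟩, ?_⟩
      simp only [coe_toExponent, hm]

theorem length_le_sum_of_pairs {P : List (Nd d × Nd d)}
    (hP : ∀ x ∈ P, x.1 ≤ x.2 ∧ x.1 ≠ x.2) :
    P.length ≤ ∑ i, (P.map fun x => x.2 - x.1).sum i := by
  induction P with
  | nil => simp
  | cons x P ih =>
    obtain ⟨hx, hP⟩ := List.forall_mem_cons.1 hP
    obtain ⟨-, i, hi⟩ := Pi.lt_def.1 (lt_of_le_of_ne hx.1 hx.2)
    have hpos : 0 < ∑ i, (x.2 - x.1) i :=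
      Finset.sum_pos' (fun _ _ => Nat.zero_le _) ⟨i, Finset.mem_univ i, Nat.sub_pos_of_lt hi⟩
    have := ih hP
    simp only [List.map_cons, List.sum_cons, Pi.add_apply, Finset.sum_add_distrib,
      List.length_cons]
    lia

theorem coeff_taylorTerm_apply (Q : Finset (Nd d)) (n : ℕ) (k : Fin d →₀ ℕ) (G : nonlin d)
    (x : ET d → ℝ) :
    (coeff k (taylorTerm Q (fun q => partialDeriv (Typ.In, q)) C jetTail n G) : nonlin d).1 x =
      ∑ P ∈ pairLists Q n k, DList (P.map fun z => ((Typ.In, z.1) : ET d)) G x *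
        (P.map fun z => x (Typ.In, z.2) / (ndFact (z.2 - z.1) : ℝ)).prod := by
  induction n generalizing k G with
  | zero => by_cases hk : k = 0 <;> simp [pairLists, taylorTerm, coeff_C, hk, DList]
  | succ n ih =>
    have hinj : Set.InjOn (fun y : Σ _ : Nd d × (Fin d →₀ ℕ) × (Fin d →₀ ℕ), List (Nd d × Nd d) =>
        (y.1.1, y.1.1 + (y.1.2.1 : Nd d)) :: y.2) (((Q ×ˢ (antidiagonal k).filter
          fun z => z.1 ≠ 0).sigma fun y => pairLists Q n y.2.2) : Finset _) := by
      rintro ⟨⟨q, h, l⟩, P⟩ hy ⟨⟨q', h', l'⟩, P'⟩ hy' heq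
      simp only [Finset.coe_sigma, Set.mem_sigma_iff, Finset.mem_coe, Finset.mem_product,
        Finset.mem_filter, mem_antidiagonal] at hy hy'
      obtain ⟨⟨rfl, hh⟩, rfl⟩ : (q = q' ∧ q + ⇑h = q' + ⇑h') ∧ P = P' := by simpa using heq
      obtain rfl : h = h' := DFunLike.coe_injective (add_left_cancel hh)
      obtain rfl : l = l' := add_left_cancel (hy.1.2.1.trans hy'.1.2.1.symm)
      rfl
    rw [pairLists, Finset.sum_image hinj, Finset.sum_sigma, Finset.sum_product, taylorTerm, map_sum,
      AddSubmonoidClass.coe_finsetSum, Finset.sum_apply]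
    refine Finset.sum_congr rfl fun q _ => ?_
    rw [coeff_mul, Finset.sum_filter, AddSubmonoidClass.coe_finsetSum, Finset.sum_apply]
    refine Finset.sum_congr rfl fun z _ => ?_
    split_ifs with hz
    · rw [MulMemClass.coe_mul, Pi.mul_apply, ih, coeff_jetTail, if_neg hz, Finset.mul_sum]
      refine Finset.sum_congr rfl fun P _ => ?_
      rw [coe_partialDeriv, G.2.dList_dedge]
      simp [coord, DList]
      ring
    · simp [coeff_jetTail, not_not.1 hz]

end Lists

section Coherence

variable {d : ℕ}

theorem paPow_apply_eq_sum_pairLists {S : Finset (ET d)} {G : NLf d} (hG : IsNonlin G)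
    (hGS : DependsOn G S) (k : Nd d) (x : ET d → ℝ) :
    paPow k G x = (ndFact k : ℝ) * ∑ n ∈ Finset.range (∑ i, k i + 1),
      ∑ P ∈ pairLists (inIndices S) n (toExponent k), 1 / (P.length.factorial : ℝ) *
        (DList (P.map fun z => ((Typ.In, z.1) : ET d)) G x *
          (P.map fun z => x (Typ.In, z.2) / (ndFact (z.2 - z.1) : ℝ)).prod) := by
  have hpow := congrFun (paPow_eq_coeff_taylorLift (G := ⟨G, hG⟩) hGS (toExponent k)) x
  rw [coe_toExponent] at hpow
  rw [hpow, SetLike.val_smul, Pi.smul_apply, smul_eq_mul, taylorLift, taylorPoly, map_sum,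
    AddSubmonoidClass.coe_finsetSum, Finset.sum_apply, Finsupp.degree_eq_sum, coe_toExponent]
  refine congrArg _ (Finset.sum_congr rfl fun n _ => ?_)
  rw [coeff_algebra_smul, SetLike.val_smul, Pi.smul_apply, coeff_taylorTerm_apply, smul_eq_mul,
    Finset.mul_sum]
  refine Finset.sum_congr rfl fun P hP => ?_
  rw [(mem_pairLists.1 hP).1, one_div]

theorem paPow_apply_eq_finsum {G : NLf d} (hG : IsNonlin G) (k : Nd d) (x : ET d → ℝ) :
    paPow k G x = (ndFact k : ℝ) *
      ∑ᶠ P ∈ {P : List (Nd d × Nd d) |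
          (∀ z ∈ P, z.1 ≤ z.2 ∧ z.1 ≠ z.2) ∧ (P.map fun z => z.2 - z.1).sum = k},
        1 / (P.length.factorial : ℝ) *
          (DList (P.map fun z => ((Typ.In, z.1) : ET d)) G x *
            (P.map fun z => x (Typ.In, z.2) / (ndFact (z.2 - z.1) : ℝ)).prod) := by
  obtain ⟨S, hS⟩ := hG.exists_dependsOn
  have hdisjoint : Set.PairwiseDisjoint (Finset.range (∑ i, k i + 1) : Set ℕ)
      fun n => pairLists (inIndices S) n (toExponent k) := fun n _ n' _ hne =>
    Finset.disjoint_left.2 fun P hP hP' =>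
      hne ((mem_pairLists.1 hP).1.symm.trans (mem_pairLists.1 hP').1)
  rw [paPow_apply_eq_sum_pairLists hG hS, ← Finset.sum_biUnion hdisjoint]
  refine congrArg _ (finsum_mem_eq_sum_of_subset _ ?_ ?_).symm
  · rintro P ⟨⟨hlt, hsum⟩, hsupport⟩
    refine Finset.mem_biUnion.2 ⟨P.length, Finset.mem_range.2 (Nat.lt_succ_of_le ?_),
      mem_pairLists.2 ⟨rfl, fun z hz => ?_, hlt, hsum⟩⟩
    · exact hsum ▸ length_le_sum_of_pairs hlt
    · by_contra hzS
      have hvanish : DList (P.map fun z => ((Typ.In, z.1) : ET d)) G = 0 :=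
        hG.dList_eq_zero hS (List.mem_map_of_mem hz) (mt mem_inIndices.2 hzS)
      exact hsupport (by simp [hvanish])
  · intro P hP
    obtain ⟨n, -, hP⟩ := Finset.mem_biUnion.1 hP
    exact (mem_pairLists.1 hP).2.2

theorem liftNL_node {Fam : ℝ → NLf d} (hFam : ∀ a, IsNonlin (Fam a)) (U : Jet d) (a : ℝ)
    (k : Nd d) (L : List (Nd d)) (B : List (Nd d × Tr d)) :
    liftNL Fam U (Tr.node a k L B) = (B.map fun y => U.r (plant0 y.2)).prod *
      paPow k (DList ((B.map fun y => ((Typ.In, y.1) : ET d)) ++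
        L.map fun l => ((Typ.Xi, l) : ET d)) (Fam a)) U.toE := by
  rw [paPow_apply_eq_finsum ((hFam a).dList _), mul_left_comm, mul_finsum_mem]
  simp only [liftNL, List.append_assoc, DList_append]
  refine congrArg _ (finsum_congr fun P => finsum_congr fun _ => ?_)
  simp only [Jet.toE]
  ring

theorem UpsB_eq_prod (Fam : ℝ → NLf d) (B : List (Nd d × Tr d)) (x : ET d → ℝ) :
    UpsB Fam B x = (B.map fun y => Ups Fam y.2 x).prod := by
  induction B with
  | nil => simp [UpsB]
  | cons y ys ih => simp [UpsB, ih]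

theorem Ups_node (Fam : ℝ → NLf d) (a : ℝ) (k : Nd d) (L : List (Nd d))
    (B : List (Nd d × Tr d)) (x : ET d → ℝ) :
    Ups Fam (Tr.node a k L B) x = (B.map fun y => Ups Fam y.2 x).prod *
      paPow k (DList ((B.map fun y => ((Typ.In, y.1) : ET d)) ++
        L.map fun l => ((Typ.Xi, l) : ET d)) (Fam a)) x := by
  rw [← UpsB_eq_prod, Ups]

theorem eq_Ups_of_eq_liftNL {Fam : ℝ → NLf d} (hFam : ∀ a, IsNonlin (Fam a)) {U : Jet d}
    (hU : ∀ τ, U.r (plant0 τ) = liftNL Fam U τ) : ∀ τ, U.r (plant0 τ) = Ups Fam τ U.toE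
  | .node a k L B => by
    have hchildren : ∀ y ∈ B, U.r (plant0 y.2) = Ups Fam y.2 U.toE := fun y _ =>
      eq_Ups_of_eq_liftNL hFam hU y.2
    rw [hU, liftNL_node hFam, Ups_node, List.map_congr_left hchildren]
termination_by τ => sizeOf τ
decreasing_by
  have hy : sizeOf y < sizeOf B := List.sizeOf_lt_of_mem ‹_›
  have hτ : sizeOf y.2 < sizeOf y := by cases y; simp
  simp only [Tr.node.sizeOf_spec]
  lia

theorem eq_liftNL_of_eq_Ups {Fam : ℝ → NLf d} (hFam : ∀ a, IsNonlin (Fam a)) {U : Jet d}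
    (hU : ∀ τ, U.r (plant0 τ) = Ups Fam τ U.toE) (τ : Tr d) :
    U.r (plant0 τ) = liftNL Fam U τ := by
  obtain ⟨a, k, L, B⟩ := τ
  rw [hU, liftNL_node hFam, Ups_node]
  simp only [hU]

theorem fixed_point_iff_coherent_general {Fam : ℝ → NLf d} (hFam : ∀ a, IsNonlin (Fam a))
    (U : Jet d) : SolvesFP Fam U ↔ Coherent Fam U :=
  and_congr_right fun _ => ⟨eq_Ups_of_eq_liftNL hFam, eq_liftNL_of_eq_Ups hFam⟩

end Coherence

/-- A jet `U` solves the algebraic fixed point equation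
`U = U^P + 𝓘_0[𝐅(U)]` if and only if it is coherent with `𝐅`. -/
theorem fixed_point_iff_coherent
    (hd : 0 < d) (Fam : ℝ → NLf d) (hFam : IsExtNonlin Fam) (U : Jet d) :
    SolvesFP Fam U ↔ Coherent Fam U :=
  fixed_point_iff_coherent_general hFam.2.2 U

end RS
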